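/- Let E : P_{μ₀}(ℝ^d) → ℝ ∪ {∞} be proper, coercive, lower semicontinuous, and λ-convex along generalized geodesics for some λ ∈ ℝ, and fix τ > 0 with λτ > −1. Then for all μ, ν in the W₂-closure of D(E), with μ_τ, ν_τ the proximal points: Λ_τ(μ_τ,ν_τ) − Λ_τ(μ,ν) ≤ −(1/2)(τ|∇_W E|(ν) − W₂(ν,ν_τ))² − (1/2)(τ|∇_W E|(μ) − W₂(μ,μ_τ))² − (λτ/2)[2W₂²(μ_τ,ν_τ) + W₂²(μ,ν_τ) + W₂²(ν,μ_τ) + W₂²(ν,ν_τ) + W₂²(μ,μ_τ)]. -/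

import Mathlib

/-!
Let `W` be the 2-Wasserstein distance, `s` the slope of `E` and `μ_τ`, `ν_τ` the proximal points.
If `s(μ)` or `s(ν)` is infinite, the left-hand side is `⊥`. Otherwise `E` is finite at `μ` and `ν`
(`ne_top_of_slope`) and the estimate combines three facts.

* The discrete evolution variational inequality (`IsProximal.evi`),
  `(1 + λτ) W²(μ_τ,ρ) - W²(μ,ρ) + W²(μ,μ_τ) ≤ 2τ (E(ρ) - E(μ_τ))`: compare `μ_τ` with the
  generalized geodesic from `μ_τ` to `ρ` based at `μ`, along which `W²(μ, ·)` is 2-convex.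
* The slope is a global modulus of decrease (`GenGeoConvex.sub_le_slope`),
  `E(μ) - E(ρ) ≤ s(μ) W(μ,ρ) - (λ/2) W²(μ,ρ)`: use the generalized geodesic from `μ` to `ρ` based
  at `μ`, which is an actual geodesic.
* The slope at a proximal point (`IsProximal.slope_le`) satisfies `τ s(μ_τ) ≤ W(μ,μ_τ)`.

Adding the variational inequality of `μ_τ` tested at `ν_τ`, that of `ν_τ` tested at `μ`, and the
slope bound between `μ` and `μ_τ` eliminates the values of `E` at `ν_τ`, `μ` and `μ_τ`. Averaging
with the inequality obtained by exchanging `μ` and `ν` gives a bound whose terms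
`τ s(μ) W(μ,μ_τ) - W²(μ,μ_τ)` become, together with the third fact, the squares
`-(τ s(μ) - W(μ,μ_τ))²/2`.

The plans provided by the convexity hypothesis are optimal, so they also yield the triangle
inequality for `W` on `Pfin μ₀` (`GenGeoConvex.W2_triangle`). Gluing of couplings (`exists_glue`)
is needed only to see that interpolants stay at finite distance from `μ₀`.
-/

open MeasureTheory Filter ENNReal

noncomputable section

/-- Euclidean space `ℝ^d`. -/
abbrev Euc (d : ℕ) := EuclideanSpace ℝ (Fin d)

/-- The squared 2-Wasserstein distance, as an extended nonnegative real:
the infimum over couplings `γ` (Borel probability measures on `ℝ^d × ℝ^d`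
with first marginal `μ` and second marginal `ν`) of `∫ |x-y|² dγ`. -/
noncomputable def W2sq {d : ℕ} (μ ν : Measure (Euc d)) : ℝ≥0∞ :=
  ⨅ (γ : Measure (Euc d × Euc d)) (_ : γ.map Prod.fst = μ ∧ γ.map Prod.snd = ν),
    ∫⁻ q, ENNReal.ofReal (‖q.1 - q.2‖ ^ 2) ∂γ

/-- The 2-Wasserstein distance (a real number; degenerate when `W2sq = ∞`). -/
noncomputable def W2 {d : ℕ} (μ ν : Measure (Euc d)) : ℝ :=
  Real.sqrt (W2sq μ ν).toReal

/-- `γ` is an optimal transport plan from `μ` to `ν`. -/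
def IsOptimalPlan {d : ℕ} (μ ν : Measure (Euc d)) (γ : Measure (Euc d × Euc d)) : Prop :=
  γ.map Prod.fst = μ ∧ γ.map Prod.snd = ν ∧
    ∫⁻ q, ENNReal.ofReal (‖q.1 - q.2‖ ^ 2) ∂γ = W2sq μ ν

/-- `P_{μ₀}(ℝ^d)`: Borel probability measures at finite `W₂`-distance from `μ₀`. -/
def Pfin {d : ℕ} (μ₀ : Measure (Euc d)) : Set (Measure (Euc d)) :=
  {μ | IsProbabilityMeasure μ ∧ W2sq μ₀ μ ≠ ⊤}

/-- `E` is proper: its domain inside `P_{μ₀}` is nonempty (and `E` never takes the value `-∞`,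
i.e. it maps into `ℝ ∪ {∞}`). -/
def ProperFn {d : ℕ} (μ₀ : Measure (Euc d)) (F : Measure (Euc d) → EReal) : Prop :=
  (∀ ρ, F ρ ≠ ⊥) ∧ ∃ ρ ∈ Pfin μ₀, F ρ ≠ ⊤

/-- The domain `D(E)` of `E`. -/
def Dom {d : ℕ} (μ₀ : Measure (Euc d)) (F : Measure (Euc d) → EReal) : Set (Measure (Euc d)) :=
  {μ ∈ Pfin μ₀ | F μ ≠ ⊤}

/-- `E` is coercive: for some `τ₀ > 0`,
`inf_ν { W₂²(μ₀,ν)/(2τ₀) + E(ν) } > -∞`. -/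
def CoerciveFn {d : ℕ} (μ₀ : Measure (Euc d)) (F : Measure (Euc d) → EReal) : Prop :=
  ∃ τ₀ : ℝ, 0 < τ₀ ∧
    ⊥ < ⨅ ν ∈ Pfin μ₀, (((W2 μ₀ ν) ^ 2 / (2 * τ₀) : ℝ) : EReal) + F ν

/-- `E` is sequentially lower semicontinuous with respect to `W₂`-convergence. -/
def W2LSC {d : ℕ} (μ₀ : Measure (Euc d)) (F : Measure (Euc d) → EReal) : Prop :=
  ∀ (s : ℕ → Measure (Euc d)) (μ : Measure (Euc d)),
    (∀ n, s n ∈ Pfin μ₀) → μ ∈ Pfin μ₀ →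
    Tendsto (fun n => W2 (s n) μ) atTop (nhds 0) →
    F μ ≤ liminf (fun n => F (s n)) atTop

/-- `E` is `λ`-convex along generalized geodesics: for all `μ₁, μ₂, μ₃ ∈ P_{μ₀}` there
is a 3-plan whose (1,2)- and (1,3)-marginals are optimal, along whose induced interpolating
curve the `λ`-convexity inequality (with the full transport cost `∫|x₂-x₃|² d𝛍`) holds. -/
def GenGeoConvex {d : ℕ} (μ₀ : Measure (Euc d)) (lam : ℝ)
    (F : Measure (Euc d) → EReal) : Prop :=
  ∀ μ₁ ∈ Pfin μ₀, ∀ μ₂ ∈ Pfin μ₀, ∀ μ₃ ∈ Pfin μ₀,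
    ∃ pl : Measure (Euc d × Euc d × Euc d),
      IsOptimalPlan μ₁ μ₂ (pl.map (fun q => (q.1, q.2.1))) ∧
      IsOptimalPlan μ₁ μ₃ (pl.map (fun q => (q.1, q.2.2))) ∧
      ∀ α ∈ Set.Icc (0:ℝ) 1,
        F (pl.map (fun q => (1 - α) • q.2.1 + α • q.2.2)) ≤
          ((1 - α : ℝ) : EReal) * F μ₂ + (α : EReal) * F μ₃ -
            ((α * (1 - α) * (lam / 2) *
              (∫⁻ q, ENNReal.ofReal (‖q.2.1 - q.2.2‖ ^ 2) ∂pl).toReal : ℝ) : EReal)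

/-- The `W₂`-closure (within `P_{μ₀}`) of a set of measures. -/
def W2Closure {d : ℕ} (μ₀ : Measure (Euc d)) (S : Set (Measure (Euc d))) :
    Set (Measure (Euc d)) :=
  {μ ∈ Pfin μ₀ | ∃ s : ℕ → Measure (Euc d), (∀ n, s n ∈ S) ∧
    Tendsto (fun n => W2 (s n) μ) atTop (nhds 0)}

/-- The Moreau–Yosida regularization `E_τ`. -/
noncomputable def MY {d : ℕ} (μ₀ : Measure (Euc d)) (F : Measure (Euc d) → EReal)
    (τ : ℝ) (μ : Measure (Euc d)) : EReal :=
  ⨅ ν ∈ Pfin μ₀, (((W2 μ ν) ^ 2 / (2 * τ) : ℝ) : EReal) + F ν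

/-- `ν` is a proximal point of `μ` for `E` with step `τ`: it minimizes
`ρ ↦ W₂²(μ,ρ)/(2τ) + E(ρ)` over `P_{μ₀}`. -/
def IsProximal {d : ℕ} (μ₀ : Measure (Euc d)) (F : Measure (Euc d) → EReal)
    (τ : ℝ) (μ ν : Measure (Euc d)) : Prop :=
  ν ∈ Pfin μ₀ ∧ ∀ ρ ∈ Pfin μ₀,
    (((W2 μ ν) ^ 2 / (2 * τ) : ℝ) : EReal) + F ν ≤
      (((W2 μ ρ) ^ 2 / (2 * τ) : ℝ) : EReal) + F ρ

/-- The positive part of an extended real, as an element of `[0,∞]`. -/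
noncomputable def ERealPos (x : EReal) : ℝ≥0∞ :=
  if x = ⊤ then ⊤ else ENNReal.ofReal x.toReal

/-- The filter of `W₂`-punctured neighborhoods of `μ` within `P_{μ₀}`. -/
def W2nhdsWithin {d : ℕ} (μ₀ μ : Measure (Euc d)) : Filter (Measure (Euc d)) :=
  ⨅ ε ∈ Set.Ioi (0:ℝ), Filter.principal {ν | ν ∈ Pfin μ₀ ∧ ν ≠ μ ∧ W2 μ ν < ε}

/-- The metric slope `|∇_W F|(μ) = limsup_{ν → μ} (F(μ)-F(ν))⁺ / W₂(μ,ν)`,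
valued in `[0,∞]`. -/
noncomputable def slopeW {d : ℕ} (μ₀ : Measure (Euc d)) (F : Measure (Euc d) → EReal)
    (μ : Measure (Euc d)) : ℝ≥0∞ :=
  Filter.limsup (fun ν => ERealPos (F μ - F ν) / ENNReal.ofReal (W2 μ ν))
    (W2nhdsWithin μ₀ μ)

/-- `Λ_τ(μ,ν) = W₂²(μ,ν) + (τ²/2)|∇_W E|(μ)² + (τ²/2)|∇_W E|(ν)²`, valued in `[0,∞]`. -/
noncomputable def LamT {d : ℕ} (μ₀ : Measure (Euc d)) (F : Measure (Euc d) → EReal)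
    (τ : ℝ) (μ ν : Measure (Euc d)) : ℝ≥0∞ :=
  W2sq μ ν + ENNReal.ofReal (τ ^ 2 / 2) * (slopeW μ₀ F μ) ^ 2
    + ENNReal.ofReal (τ ^ 2 / 2) * (slopeW μ₀ F ν) ^ 2

/-- `Λ_τ` as an extended real (allowing the slopes to be infinite). -/
noncomputable def LamE {d : ℕ} (μ₀ : Measure (Euc d)) (F : Measure (Euc d) → EReal)
    (τ : ℝ) (μ ν : Measure (Euc d)) : EReal :=
  (((W2 μ ν) ^ 2 : ℝ) : EReal)
    + ((τ ^ 2 / 2 : ℝ) : EReal) * (slopeW μ₀ F μ : EReal) ^ 2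
    + ((τ ^ 2 / 2 : ℝ) : EReal) * (slopeW μ₀ F ν : EReal) ^ 2

/-! ### The squared Wasserstein distance -/

lemma W2_nonneg {d : ℕ} (μ ν : Measure (Euc d)) : 0 ≤ W2 μ ν := Real.sqrt_nonneg _

lemma W2_sq {d : ℕ} (μ ν : Measure (Euc d)) : W2 μ ν ^ 2 = (W2sq μ ν).toReal :=
  Real.sq_sqrt ENNReal.toReal_nonneg

/-- Any pair of random vectors with laws `μ` and `ν` bounds the Wasserstein distance. -/
lemma W2sq_map_le {d : ℕ} {Ω : Type*} [MeasurableSpace Ω] (P : Measure Ω) {f g : Ω → Euc d}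
    (hf : Measurable f) (hg : Measurable g) :
    W2sq (P.map f) (P.map g) ≤ ∫⁻ ω, ENNReal.ofReal (‖f ω - g ω‖ ^ 2) ∂P := by
  have hfg : Measurable (fun ω => (f ω, g ω)) := hf.prodMk hg
  refine (iInf₂_le (P.map (fun ω => (f ω, g ω))) ⟨?_, ?_⟩).trans ?_
  · rw [lintegral_map (by fun_prop) hfg]
  · rw [Measure.map_map measurable_fst hfg]; rfl
  · rw [Measure.map_map measurable_snd hfg]; rfl

lemma W2sq_self {d : ℕ} (μ : Measure (Euc d)) : W2sq μ μ = 0 := by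
  simpa using W2sq_map_le μ (f := id) (g := id) measurable_id measurable_id

lemma W2sq_comm_le {d : ℕ} (μ ν : Measure (Euc d)) : W2sq μ ν ≤ W2sq ν μ := by
  refine le_iInf₂ ?_
  rintro γ ⟨rfl, rfl⟩
  refine (W2sq_map_le γ measurable_snd measurable_fst).trans (le_of_eq ?_)
  simp_rw [norm_sub_rev]

lemma W2sq_comm {d : ℕ} (μ ν : Measure (Euc d)) : W2sq μ ν = W2sq ν μ :=
  le_antisymm (W2sq_comm_le μ ν) (W2sq_comm_le ν μ)

lemma W2_comm {d : ℕ} (μ ν : Measure (Euc d)) : W2 μ ν = W2 ν μ := by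
  rw [W2, W2, W2sq_comm]

/-- Gluing lemma: two couplings sharing their first marginal are both marginals of a
three-fold coupling, built by making the two conditional laws independent. -/
lemma exists_glue {d : ℕ} (γ₁ γ₂ : Measure (Euc d × Euc d)) [IsFiniteMeasure γ₁]
    [IsFiniteMeasure γ₂] (h : γ₁.map Prod.fst = γ₂.map Prod.fst) :
    ∃ P : Measure (Euc d × Euc d × Euc d),
      P.map (fun q => (q.1, q.2.1)) = γ₁ ∧ P.map (fun q => (q.1, q.2.2)) = γ₂ := by
  refine ⟨γ₁.fst.compProd (γ₁.condKernel.prod γ₂.condKernel), ?_, ?_⟩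
  · have := Measure.compProd_map (μ := γ₁.fst) (κ := γ₁.condKernel.prod γ₂.condKernel)
      (f := Prod.fst) measurable_fst
    rw [← ProbabilityTheory.Kernel.fst_eq, ProbabilityTheory.Kernel.fst_prod,
      Measure.disintegrate] at this
    exact this.symm
  · have := Measure.compProd_map (μ := γ₁.fst) (κ := γ₁.condKernel.prod γ₂.condKernel)
      (f := Prod.snd) measurable_snd
    rw [← ProbabilityTheory.Kernel.snd_eq, ProbabilityTheory.Kernel.snd_prod,
      show γ₁.fst = γ₂.fst from h, Measure.disintegrate] at this
    rw [show γ₁.fst = γ₂.fst from h]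
    exact this.symm

/-- Weighted form of the triangle inequality in `L²`. -/
lemma lintegral_sq_triangle {d : ℕ} (P : Measure (Euc d × Euc d × Euc d)) {t : ℝ} (ht : 0 < t) :
    ∫⁻ q, ENNReal.ofReal (‖q.2.1 - q.2.2‖ ^ 2) ∂P ≤
      ENNReal.ofReal (1 + t) * ∫⁻ q, ENNReal.ofReal (‖q.1 - q.2.1‖ ^ 2) ∂P +
      ENNReal.ofReal (1 + 1 / t) * ∫⁻ q, ENNReal.ofReal (‖q.1 - q.2.2‖ ^ 2) ∂P := by
  rw [← lintegral_const_mul _ (by fun_prop), ← lintegral_const_mul _ (by fun_prop),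
    ← lintegral_add_left (by fun_prop)]
  refine lintegral_mono fun q => ?_
  rw [← ENNReal.ofReal_mul (by positivity), ← ENNReal.ofReal_mul (by positivity),
    ← ENNReal.ofReal_add (by positivity) (by positivity)]
  refine ENNReal.ofReal_le_ofReal ?_
  have h1 : ‖q.2.1 - q.2.2‖ ≤ ‖q.1 - q.2.1‖ + ‖q.1 - q.2.2‖ := by
    have := norm_sub_le (q.1 - q.2.2) (q.1 - q.2.1)
    rw [show q.1 - q.2.2 - (q.1 - q.2.1) = q.2.1 - q.2.2 by abel] at this
    linarith
  set a := ‖q.1 - q.2.1‖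
  set b := ‖q.1 - q.2.2‖
  have h2 : ‖q.2.1 - q.2.2‖ ^ 2 ≤ (a + b) ^ 2 := by gcongr
  -- Young's inequality `2ab ≤ t a² + b² / t`
  have h3 : (1 + t) * a ^ 2 + (1 + 1 / t) * b ^ 2 - (a + b) ^ 2 = (t * a - b) ^ 2 / t := by
    field_simp; ring
  have h4 : 0 ≤ (t * a - b) ^ 2 / t := by positivity
  linarith

/-- Finiteness of the Wasserstein distance is transitive. This is obtained by gluing rather than
from convexity, as it serves to show that interpolants belong to `Pfin μ₀`. -/
lemma W2sq_ne_top_trans {d : ℕ} {μ ν ρ : Measure (Euc d)} (hν : IsProbabilityMeasure ν)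
    (h1 : W2sq ν μ ≠ ⊤) (h2 : W2sq ν ρ ≠ ⊤) : W2sq μ ρ ≠ ⊤ := by
  have key : ∀ σ : Measure (Euc d), W2sq ν σ ≠ ⊤ → ∃ γ : Measure (Euc d × Euc d),
      IsFiniteMeasure γ ∧ γ.map Prod.fst = ν ∧ γ.map Prod.snd = σ ∧
      ∫⁻ q, ENNReal.ofReal (‖q.1 - q.2‖ ^ 2) ∂γ < ⊤ := by
    intro σ hσ
    have h : W2sq ν σ < ⊤ := lt_top_iff_ne_top.2 hσ
    simp only [W2sq, iInf_lt_iff] at h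
    obtain ⟨γ, ⟨ha, hb⟩, hc⟩ := h
    refine ⟨γ, ?_, ha, hb, hc⟩
    have : IsProbabilityMeasure (γ.map Prod.fst) := ha ▸ hν
    have := Measure.isProbabilityMeasure_of_map (μ := γ) Prod.fst
    infer_instance
  obtain ⟨γ₁, _, ha1, hb1, hc1⟩ := key μ h1
  obtain ⟨γ₂, _, ha2, hb2, hc2⟩ := key ρ h2
  obtain ⟨P, hP1, hP2⟩ := exists_glue γ₁ γ₂ (ha1.trans ha2.symm)
  have hμ : P.map (fun q => q.2.1) = μ := by
    rw [← hb1, ← hP1, Measure.map_map (by fun_prop) (by fun_prop)]; rfl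
  have hρ : P.map (fun q => q.2.2) = ρ := by
    rw [← hb2, ← hP2, Measure.map_map (by fun_prop) (by fun_prop)]; rfl
  rw [← hP1, lintegral_map (by fun_prop) (by fun_prop)] at hc1
  rw [← hP2, lintegral_map (by fun_prop) (by fun_prop)] at hc2
  rw [← hμ, ← hρ]
  refine ((W2sq_map_le P (by fun_prop) (by fun_prop)).trans
    (lintegral_sq_triangle P one_pos)).trans_lt ?_ |>.ne
  exact ENNReal.add_lt_top.2 ⟨ENNReal.mul_lt_top ENNReal.ofReal_lt_top hc1,
    ENNReal.mul_lt_top ENNReal.ofReal_lt_top hc2⟩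

lemma Pfin.W2sq_ne_top {d : ℕ} {μ₀ μ ν : Measure (Euc d)} (h₀ : IsProbabilityMeasure μ₀)
    (hμ : μ ∈ Pfin μ₀) (hν : ν ∈ Pfin μ₀) : W2sq μ ν ≠ ⊤ :=
  W2sq_ne_top_trans h₀ hμ.2 hν.2

/-- The strong convexity identity of `|x - ·|²` along segments, integrated against a plan. -/
lemma lintegral_interp {d : ℕ} (P : Measure (Euc d × Euc d × Euc d)) {α : ℝ}
    (hα : α ∈ Set.Icc (0 : ℝ) 1) :
    ∫⁻ q, ENNReal.ofReal (‖q.1 - ((1 - α) • q.2.1 + α • q.2.2)‖ ^ 2) ∂P +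
      ENNReal.ofReal (α * (1 - α)) * ∫⁻ q, ENNReal.ofReal (‖q.2.1 - q.2.2‖ ^ 2) ∂P =
      ENNReal.ofReal (1 - α) * ∫⁻ q, ENNReal.ofReal (‖q.1 - q.2.1‖ ^ 2) ∂P +
      ENNReal.ofReal α * ∫⁻ q, ENNReal.ofReal (‖q.1 - q.2.2‖ ^ 2) ∂P := by
  have h0 := hα.1
  have h1 : 0 ≤ 1 - α := by linarith [hα.2]
  rw [← lintegral_const_mul _ (by fun_prop), ← lintegral_const_mul _ (by fun_prop),
    ← lintegral_const_mul _ (by fun_prop), ← lintegral_add_left (by fun_prop),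
    ← lintegral_add_left (by fun_prop)]
  congr 1
  ext q
  rw [← ENNReal.ofReal_mul (by positivity), ← ENNReal.ofReal_mul (by positivity),
    ← ENNReal.ofReal_mul (by positivity),
    ← ENNReal.ofReal_add (by positivity) (by positivity),
    ← ENNReal.ofReal_add (by positivity) (by positivity)]
  congr 1
  have e1 : q.1 - ((1 - α) • q.2.1 + α • q.2.2) =
      (1 - α) • (q.1 - q.2.1) + α • (q.1 - q.2.2) := by module
  have e2 : q.2.1 - q.2.2 = (q.1 - q.2.2) - (q.1 - q.2.1) := by abel
  rw [e1, e2, norm_add_sq_real, norm_sub_sq_real, norm_smul, norm_smul, inner_smul_left,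
    inner_smul_right, real_inner_comm, Real.norm_of_nonneg h0, Real.norm_of_nonneg h1]
  simp only [conj_trivial]
  ring

/-! ### Consequences of convexity along generalized geodesics -/

/-- Elementary passage from the weighted to the usual triangle inequality. -/
lemma le_add_of_forall_weighted {a b c : ℝ} (ha : 0 ≤ a) (hb : 0 ≤ b)
    (h : ∀ t : ℝ, 0 < t → c ≤ (1 + t) * a ^ 2 + (1 + 1 / t) * b ^ 2) : c ≤ (a + b) ^ 2 := by
  have key : ∀ ε : ℝ, 0 < ε → c ≤ (a + b + 2 * ε) ^ 2 := by
    intro ε hε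
    -- the optimal weight is `b / a`; `ε` keeps it positive and finite
    have := h ((b + ε) / (a + ε)) (by positivity)
    have h1 : a ^ 2 ≤ (a + ε) ^ 2 := by gcongr; linarith
    have h2 : b ^ 2 ≤ (b + ε) ^ 2 := by gcongr; linarith
    calc c ≤ _ := this
      _ ≤ (1 + (b + ε) / (a + ε)) * (a + ε) ^ 2
          + (1 + 1 / ((b + ε) / (a + ε))) * (b + ε) ^ 2 := by gcongr
      _ = _ := by field_simp; ring
  have hc : Tendsto (fun ε : ℝ => (a + b + 2 * ε) ^ 2) (nhdsWithin 0 (Set.Ioi 0))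
      (nhds ((a + b) ^ 2)) := by
    have : Continuous (fun ε : ℝ => (a + b + 2 * ε) ^ 2) := by fun_prop
    simpa using (this.tendsto 0).mono_left nhdsWithin_le_nhds
  exact ge_of_tendsto hc (eventually_mem_nhdsWithin.mono key)

/-- Convexity along generalized geodesics in terms of real numbers: `C` is the cost
`∫ |x₂ - x₃|²` of the plan, and `ρ` the interpolant at time `α`. The bounds on `C` contain the
triangle inequality for `W2`. -/
lemma GenGeoConvex.exists_interp {d : ℕ} {μ₀ : Measure (Euc d)} {lam : ℝ}
    {F : Measure (Euc d) → EReal} (hconv : GenGeoConvex μ₀ lam F)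
    (h₀ : IsProbabilityMeasure μ₀) {μ₁ μ₂ μ₃ : Measure (Euc d)}
    (h1 : μ₁ ∈ Pfin μ₀) (h2 : μ₂ ∈ Pfin μ₀) (h3 : μ₃ ∈ Pfin μ₀) :
    ∃ C : ℝ, W2 μ₂ μ₃ ^ 2 ≤ C ∧ C ≤ (W2 μ₁ μ₂ + W2 μ₁ μ₃) ^ 2 ∧
      ∀ α ∈ Set.Icc (0 : ℝ) 1, ∃ ρ ∈ Pfin μ₀,
        W2 μ₁ ρ ^ 2 ≤ (1 - α) * W2 μ₁ μ₂ ^ 2 + α * W2 μ₁ μ₃ ^ 2 - α * (1 - α) * C ∧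
        F ρ ≤ ((1 - α : ℝ) : EReal) * F μ₂ + (α : EReal) * F μ₃ -
            ((α * (1 - α) * (lam / 2) * C : ℝ) : EReal) := by
  obtain ⟨pl, ⟨ha2, hb2, hc2⟩, ⟨ha3, hb3, hc3⟩, hF⟩ := hconv μ₁ h1 μ₂ h2 μ₃ h3
  have := h1.1
  rw [Measure.map_map (by fun_prop) (by fun_prop)] at ha2 hb2 hb3
  rw [lintegral_map (by fun_prop) (by fun_prop)] at hc2 hc3
  have hfst : pl.map (fun q => q.1) = μ₁ := ha2
  have hmid : pl.map (fun q => q.2.1) = μ₂ := hb2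
  have hlast : pl.map (fun q => q.2.2) = μ₃ := hb3
  have hA : W2sq μ₁ μ₂ ≠ ⊤ := Pfin.W2sq_ne_top h₀ h1 h2
  have hB : W2sq μ₁ μ₃ ≠ ⊤ := Pfin.W2sq_ne_top h₀ h1 h3
  have hpl : IsProbabilityMeasure pl := by
    have : IsProbabilityMeasure (pl.map (fun q => q.1)) := hfst ▸ h1.1
    exact Measure.isProbabilityMeasure_of_map (μ := pl) (fun q => q.1)
  have hT : ∀ t : ℝ, 0 < t → _ := fun t ht => lintegral_sq_triangle pl ht
  have hI : ∀ α ∈ Set.Icc (0 : ℝ) 1, _ := fun α hα => lintegral_interp pl hα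
  have hW : W2sq μ₂ μ₃ ≤ ∫⁻ q, ENNReal.ofReal (‖q.2.1 - q.2.2‖ ^ 2) ∂pl := by
    rw [← hmid, ← hlast]
    exact W2sq_map_le pl (by fun_prop) (by fun_prop)
  simp only at hc2 hc3
  simp only [hc2, hc3] at hT hI
  set c := ∫⁻ q, ENNReal.ofReal (‖q.2.1 - q.2.2‖ ^ 2) ∂pl with hc
  have hcT : c ≠ ⊤ := ne_top_of_le_ne_top (by finiteness) (hT 1 one_pos)
  refine ⟨c.toReal, ?_, ?_, ?_⟩
  · rw [W2_sq]; exact ENNReal.toReal_mono hcT hW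
  · refine le_add_of_forall_weighted (W2_nonneg _ _) (W2_nonneg _ _) fun t ht => ?_
    have := ENNReal.toReal_mono (by finiteness) (hT t ht)
    rwa [ENNReal.toReal_add (by finiteness) (by finiteness), ENNReal.toReal_mul,
      ENNReal.toReal_mul, ENNReal.toReal_ofReal (by positivity),
      ENNReal.toReal_ofReal (by positivity), ← W2_sq, ← W2_sq] at this
  · intro α hα
    have h0 := hα.1
    have h1' : 0 ≤ 1 - α := by linarith [hα.2]
    have hI := hI α hα
    have hWα : W2sq μ₁ (pl.map (fun q => (1 - α) • q.2.1 + α • q.2.2)) ≤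
        ∫⁻ q, ENNReal.ofReal (‖q.1 - ((1 - α) • q.2.1 + α • q.2.2)‖ ^ 2) ∂pl := by
      conv_lhs => rw [← hfst]
      exact W2sq_map_le pl (by fun_prop) (by fun_prop)
    set e := ∫⁻ q, ENNReal.ofReal (‖q.1 - ((1 - α) • q.2.1 + α • q.2.2)‖ ^ 2) ∂pl
    have heT : e ≠ ⊤ :=
      ne_top_of_le_ne_top (by finiteness) (le_self_add.trans hI.le)
    refine ⟨_, ⟨Measure.isProbabilityMeasure_map (by fun_prop), ?_⟩, ?_, hF α hα⟩
    · exact W2sq_ne_top_trans h1.1 (W2sq_comm μ₀ μ₁ ▸ h1.2) (ne_top_of_le_ne_top heT hWα)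
    · have h4 := congrArg ENNReal.toReal hI
      rw [ENNReal.toReal_add (by finiteness) (by finiteness),
        ENNReal.toReal_add (by finiteness) (by finiteness), ENNReal.toReal_mul,
        ENNReal.toReal_mul, ENNReal.toReal_mul, ENNReal.toReal_ofReal (by positivity),
        ENNReal.toReal_ofReal (by positivity), ENNReal.toReal_ofReal (by positivity),
        ← W2_sq, ← W2_sq] at h4
      have h5 := ENNReal.toReal_mono heT hWα
      rw [← W2_sq] at h5
      linarith

lemma GenGeoConvex.W2_triangle {d : ℕ} {μ₀ : Measure (Euc d)} {lam : ℝ}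
    {F : Measure (Euc d) → EReal} (hconv : GenGeoConvex μ₀ lam F)
    (h₀ : IsProbabilityMeasure μ₀) {μ₁ μ₂ μ₃ : Measure (Euc d)}
    (h1 : μ₁ ∈ Pfin μ₀) (h2 : μ₂ ∈ Pfin μ₀) (h3 : μ₃ ∈ Pfin μ₀) :
    W2 μ₂ μ₃ ≤ W2 μ₁ μ₂ + W2 μ₁ μ₃ := by
  obtain ⟨C, hC1, hC2, -⟩ := hconv.exists_interp h₀ h1 h2 h3
  exact le_of_sq_le_sq (hC1.trans hC2) (add_nonneg (W2_nonneg _ _) (W2_nonneg _ _))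

/-- A linear lower bound near `0⁺` passes to the limit. -/
lemma le_of_forall_small {x y k δ : ℝ} (hδ : 0 < δ)
    (h : ∀ α : ℝ, 0 < α → α < δ → x + (1 - α) * k ≤ y) : x + k ≤ y := by
  have hc : Tendsto (fun α : ℝ => x + (1 - α) * k) (nhdsWithin 0 (Set.Ioi 0))
      (nhds (x + k)) := by
    have : Continuous (fun α : ℝ => x + (1 - α) * k) := by fun_prop
    simpa using (this.tendsto 0).mono_left nhdsWithin_le_nhds
  refine le_of_tendsto hc ?_
  filter_upwards [Ioo_mem_nhdsGT hδ] with α hα using h α hα.1 hα.2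

/-- Discrete evolution variational inequality: the proximal point satisfies
`(1 + λτ) W₂²(μ_τ,ρ) - W₂²(μ,ρ) + W₂²(μ,μ_τ) ≤ 2τ (E(ρ) - E(μ_τ))`. It is the first-order
optimality condition along the generalized geodesic from `μ_τ` to `ρ` based at `μ`. -/
lemma IsProximal.evi {d : ℕ} {μ₀ : Measure (Euc d)} {lam τ : ℝ}
    {F : Measure (Euc d) → EReal} (hconv : GenGeoConvex μ₀ lam F)
    (h₀ : IsProbabilityMeasure μ₀) (hτ : 0 < τ) (hlamτ : lam * τ > -1)
    {μ μτ ρ : Measure (Euc d)} (hμ : μ ∈ Pfin μ₀) (hρ : ρ ∈ Pfin μ₀)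
    (hp : IsProximal μ₀ F τ μ μτ) {e r : ℝ} (he : F μτ = e) (hr : F ρ = r) :
    (1 + lam * τ) * W2 μτ ρ ^ 2 - W2 μ ρ ^ 2 + W2 μ μτ ^ 2 ≤ 2 * τ * (r - e) := by
  obtain ⟨C, hC1, -, hC⟩ := hconv.exists_interp h₀ hμ hp.1 hρ
  have key : W2 μ μτ ^ 2 - W2 μ ρ ^ 2 + (1 + lam * τ) * C ≤ 2 * τ * (r - e) := by
    refine le_of_forall_small one_pos fun α h0 h1 => ?_
    obtain ⟨σ, hσ, hW, hFσ⟩ := hC α ⟨h0.le, h1.le⟩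
    have hmin := (hp.2 σ hσ).trans (add_le_add_right hFσ _)
    rw [he, hr] at hmin
    norm_cast at hmin
    have h2 : W2 μ μτ ^ 2 + 2 * τ * e ≤ W2 μ σ ^ 2 +
        2 * τ * ((1 - α) * e + α * r - α * (1 - α) * (lam / 2) * C) := by
      have := mul_le_mul_of_nonneg_left hmin (by positivity : 0 ≤ 2 * τ)
      rwa [mul_add, mul_add, mul_div_cancel₀ _ (by positivity),
        mul_div_cancel₀ _ (by positivity)] at this
    have h3 : α * (W2 μ μτ ^ 2 - W2 μ ρ ^ 2 + (1 - α) * ((1 + lam * τ) * C)) ≤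
        α * (2 * τ * (r - e)) := by linarith
    exact le_of_mul_le_mul_left h3 h0
  have := mul_le_mul_of_nonneg_left hC1 (by linarith : 0 ≤ 1 + lam * τ)
  linarith

/-! ### The metric slope -/

lemma eventually_W2nhdsWithin {d : ℕ} {μ₀ μ : Measure (Euc d)} {p : Measure (Euc d) → Prop} :
    (∀ᶠ ν in W2nhdsWithin μ₀ μ, p ν) ↔
      ∃ δ : ℝ, 0 < δ ∧ ∀ ν ∈ Pfin μ₀, ν ≠ μ → W2 μ ν < δ → p ν := by
  have hb : (W2nhdsWithin μ₀ μ).HasBasis (fun ε : ℝ => ε ∈ Set.Ioi 0)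
      (fun ε => {ν | ν ∈ Pfin μ₀ ∧ ν ≠ μ ∧ W2 μ ν < ε}) := by
    refine Filter.hasBasis_biInf_principal ?_ ⟨1, Set.mem_Ioi.2 one_pos⟩
    intro a ha b hb
    refine ⟨min a b, Set.mem_Ioi.2 (lt_min ha hb), ?_, ?_⟩
    · exact fun ν h => ⟨h.1, h.2.1, h.2.2.trans_le (min_le_left _ _)⟩
    · exact fun ν h => ⟨h.1, h.2.1, h.2.2.trans_le (min_le_right _ _)⟩
  rw [hb.eventually_iff]
  simp only [Set.mem_Ioi, Set.mem_ofPred_eq, and_imp]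

/-- A finite slope controls the decrease of `F` near `μ`. -/
lemma exists_slope_bound {d : ℕ} {μ₀ μ : Measure (Euc d)} {F : Measure (Euc d) → EReal}
    {c : ℝ} (h : slopeW μ₀ F μ < ENNReal.ofReal c) :
    ∃ δ : ℝ, 0 < δ ∧ ∀ ν ∈ Pfin μ₀, ν ≠ μ → W2 μ ν < δ →
      ERealPos (F μ - F ν) ≤ ENNReal.ofReal (c * W2 μ ν) := by
  have hc : 0 < c := by
    by_contra hc
    rw [ENNReal.ofReal_of_nonpos (not_lt.1 hc)] at h
    exact ENNReal.not_lt_zero h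
  obtain ⟨δ, hδ, H⟩ := eventually_W2nhdsWithin.1 (eventually_lt_of_limsup_lt h)
  refine ⟨δ, hδ, fun ν hν hne hlt => ?_⟩
  rw [ENNReal.ofReal_mul hc.le]
  exact (ENNReal.div_le_iff_le_mul (Or.inr ENNReal.ofReal_ne_top)
    (Or.inl ENNReal.ofReal_ne_top)).1 (H ν hν hne hlt).le

/-- In the closure of the domain, the slope is infinite wherever `F` is. -/
lemma ne_top_of_slope {d : ℕ} {μ₀ μ : Measure (Euc d)} {F : Measure (Euc d) → EReal}
    (hbot : ∀ ρ, F ρ ≠ ⊥) (hμ : μ ∈ W2Closure μ₀ (Dom μ₀ F)) (hs : slopeW μ₀ F μ ≠ ⊤) :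
    F μ ≠ ⊤ := by
  intro htop
  obtain ⟨-, s, hsD, hlim⟩ := hμ
  obtain ⟨δ, hδ, H⟩ := exists_slope_bound (F := F) (μ₀ := μ₀) (μ := μ)
    (c := (slopeW μ₀ F μ).toReal + 1) (by
      rw [ENNReal.ofReal_add (by positivity) zero_le_one, ENNReal.ofReal_toReal hs]
      exact ENNReal.lt_add_right hs (by simp))
  obtain ⟨n, hn⟩ := (hlim.eventually (gt_mem_nhds hδ)).exists
  have hne : s n ≠ μ := fun h => (hsD n).2 (h ▸ htop)
  have := H (s n) (hsD n).1 hne (by rwa [W2_comm])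
  have h2 : F μ - F (s n) = ⊤ := by
    have h := (hsD n).2
    have h' := hbot (s n)
    rw [htop]
    lift F (s n) to ℝ using ⟨h, h'⟩ with x
    exact EReal.top_sub_coe x
  rw [h2, ERealPos, if_pos rfl] at this
  exact ENNReal.ofReal_ne_top (top_le_iff.1 this)

/-- Under convexity the slope bounds the decrease of `F` globally, not only near `μ`:
the generalized geodesic based at `μ` itself is a geodesic issuing from `μ`. -/
lemma GenGeoConvex.sub_le_slope {d : ℕ} {μ₀ : Measure (Euc d)} {lam : ℝ}
    {F : Measure (Euc d) → EReal} (hbot : ∀ ρ, F ρ ≠ ⊥) (hconv : GenGeoConvex μ₀ lam F)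
    (h₀ : IsProbabilityMeasure μ₀) {μ ρ : Measure (Euc d)}
    (hμ : μ ∈ Pfin μ₀) (hρ : ρ ∈ Pfin μ₀) {e r : ℝ} (he : F μ = e) (hr : F ρ = r)
    (hs : slopeW μ₀ F μ ≠ ⊤) :
    e - r + lam / 2 * W2 μ ρ ^ 2 ≤ (slopeW μ₀ F μ).toReal * W2 μ ρ := by
  set s := (slopeW μ₀ F μ).toReal with hsdef
  have hs0 : 0 ≤ s := ENNReal.toReal_nonneg
  have hw := W2_nonneg μ ρ
  have h00 : W2 μ μ = 0 := by simp [W2, W2sq_self]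
  obtain ⟨C, hC1, hC2, hC⟩ := hconv.exists_interp h₀ hμ hμ hρ
  rw [h00, zero_add] at hC2
  -- the first two marginals of the plan agree, so its cost is exactly `W₂²(μ,ρ)`
  obtain rfl : C = W2 μ ρ ^ 2 := le_antisymm hC2 hC1
  have key : ∀ ε : ℝ, 0 < ε → e - r + lam / 2 * W2 μ ρ ^ 2 ≤ (s + ε) * W2 μ ρ := by
    intro ε hε
    obtain ⟨δ, hδ, H⟩ := exists_slope_bound (F := F) (μ₀ := μ₀) (μ := μ) (c := s + ε) (by
      rw [ENNReal.ofReal_add hs0 hε.le, hsdef, ENNReal.ofReal_toReal hs]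
      exact ENNReal.lt_add_right hs (by simpa using hε))
    refine le_of_forall_small (δ := min 1 (δ / (W2 μ ρ + 1))) (by positivity)
      fun α hα0 hα => ?_
    have hα1 : α < 1 := hα.trans_le (min_le_left _ _)
    have hαδ : α * (W2 μ ρ + 1) < δ :=
      (lt_div_iff₀ (by positivity)).1 (hα.trans_le (min_le_right _ _))
    obtain ⟨σ, hσ, hW, hFσ⟩ := hC α ⟨hα0.le, hα1.le⟩
    have hWσ : W2 μ σ ≤ α * W2 μ ρ := by
      refine le_of_sq_le_sq ?_ (by positivity)
      rw [h00] at hW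
      linarith
    rw [he, hr] at hFσ
    norm_cast at hFσ
    have hσtop : F σ ≠ ⊤ := ne_top_of_le_ne_top (EReal.coe_ne_top _) hFσ
    have hσbot := hbot σ
    have hdec : e - (F σ).toReal ≤ (s + ε) * W2 μ σ := by
      -- the slope ignores `μ` itself, but for `σ = μ` both sides vanish
      by_cases hne : σ = μ
      · rw [hne, he, h00]; simp
      · have := H σ hσ hne (by nlinarith)
        rw [he] at this
        lift F σ to ℝ using ⟨hσtop, hσbot⟩ with f
        rw [← EReal.coe_sub, ERealPos, if_neg (EReal.coe_ne_top _), EReal.toReal_coe,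
          ENNReal.ofReal_le_ofReal_iff (mul_nonneg (by positivity) (W2_nonneg _ _))] at this
        simpa using this
    lift F σ to ℝ using ⟨hσtop, hσbot⟩ with f
    rw [EReal.toReal_coe] at hdec
    have hFσ := EReal.coe_le_coe_iff.1 hFσ
    have h3 : (s + ε) * W2 μ σ ≤ (s + ε) * (α * W2 μ ρ) := by gcongr
    have h4 : α * (e - r + (1 - α) * (lam / 2 * W2 μ ρ ^ 2)) ≤ α * ((s + ε) * W2 μ ρ) := by
      linarith
    exact le_of_mul_le_mul_left h4 hα0
  have hc : Tendsto (fun ε : ℝ => (s + ε) * W2 μ ρ) (nhdsWithin 0 (Set.Ioi 0))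
      (nhds (s * W2 μ ρ)) := by
    have : Continuous (fun ε : ℝ => (s + ε) * W2 μ ρ) := by fun_prop
    simpa using (this.tendsto 0).mono_left nhdsWithin_le_nhds
  exact ge_of_tendsto hc (eventually_mem_nhdsWithin.mono key)

/-- The slope at a proximal point satisfies `τ |∇E|(μ_τ) ≤ W₂(μ,μ_τ)`: by minimality and the
triangle inequality, `E(μ_τ) - E(ρ)` is at most `W₂(μ_τ,ρ) (W₂(μ,μ_τ) + W₂(μ_τ,ρ)/2) / τ`. -/
lemma IsProximal.slope_le {d : ℕ} {μ₀ : Measure (Euc d)} {lam τ : ℝ}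
    {F : Measure (Euc d) → EReal} (hbot : ∀ ρ, F ρ ≠ ⊥) (hconv : GenGeoConvex μ₀ lam F)
    (h₀ : IsProbabilityMeasure μ₀) (hτ : 0 < τ)
    {μ μτ : Measure (Euc d)} (hμ : μ ∈ Pfin μ₀)
    (hp : IsProximal μ₀ F τ μ μτ) {e : ℝ} (he : F μτ = e) :
    slopeW μ₀ F μτ ≤ ENNReal.ofReal (W2 μ μτ / τ) := by
  have hw := W2_nonneg μ μτ
  refine ENNReal.le_of_forall_pos_le_add fun ε hε _ => ?_
  have hε' : (0 : ℝ) < ε := hε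
  refine limsup_le_of_le (by isBoundedDefault) (eventually_W2nhdsWithin.2
    ⟨2 * τ * ε, by positivity, fun ρ hρ _ hlt => ?_⟩)
  -- valid also when `W2 μτ ρ = 0`: the product bound then forces `0 / 0 = 0`
  refine ENNReal.div_le_of_le_mul ?_
  rw [← ENNReal.ofReal_coe_nnreal, ← ENNReal.ofReal_add (by positivity) (by positivity),
    ← ENNReal.ofReal_mul (by positivity), he]
  have hρbot := hbot ρ
  have hmin := hp.2 ρ hρ
  rw [he] at hmin
  by_cases hρtop : F ρ = ⊤
  · simp [hρtop, ERealPos]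
  lift F ρ to ℝ using ⟨hρtop, hρbot⟩ with r
  rw [← EReal.coe_sub, ERealPos, if_neg (EReal.coe_ne_top _), EReal.toReal_coe]
  refine ENNReal.ofReal_le_ofReal ?_
  norm_cast at hmin
  have htri : W2 μ ρ ≤ W2 μ μτ + W2 μτ ρ := by
    have := hconv.W2_triangle h₀ hp.1 hμ hρ
    rwa [W2_comm μτ μ] at this
  have hv := W2_nonneg μτ ρ
  have h1 : W2 μ ρ ^ 2 ≤ (W2 μ μτ + W2 μτ ρ) ^ 2 := by
    have := W2_nonneg μ ρ
    gcongr
  have h2 : W2 μ ρ ^ 2 / (2 * τ) ≤ (W2 μ μτ + W2 μτ ρ) ^ 2 / (2 * τ) := by gcongr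
  have h3 : (W2 μ μτ + W2 μτ ρ) ^ 2 / (2 * τ) =
      W2 μ μτ ^ 2 / (2 * τ) + (W2 μ μτ / τ + W2 μτ ρ / (2 * τ)) * W2 μτ ρ := by
    field_simp; ring
  have h4 : W2 μτ ρ / (2 * τ) ≤ ε := by
    rw [div_le_iff₀ (by positivity)]; linarith
  have h5 : (W2 μ μτ / τ + W2 μτ ρ / (2 * τ)) * W2 μτ ρ ≤ (W2 μ μτ / τ + ε) * W2 μτ ρ := by
    gcongr
  linarith

lemma IsProximal.ne_top {d : ℕ} {μ₀ : Measure (Euc d)} {τ : ℝ} {F : Measure (Euc d) → EReal}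
    (hproper : ProperFn μ₀ F) {μ μτ : Measure (Euc d)} (hp : IsProximal μ₀ F τ μ μτ) :
    F μτ ≠ ⊤ := by
  intro htop
  obtain ⟨hbot, ρ, hρ, hρtop⟩ := hproper
  have h := hp.2 ρ hρ
  have hρbot := hbot ρ
  rw [htop, EReal.coe_add_top] at h
  lift F ρ to ℝ using ⟨hρtop, hρbot⟩ with r
  rw [← EReal.coe_add] at h
  exact EReal.coe_ne_top _ (top_le_iff.1 h)

/-! ### The contraction estimate -/

lemma LamE_eq_top {d : ℕ} {μ₀ : Measure (Euc d)} {F : Measure (Euc d) → EReal} {τ : ℝ}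
    (hτ : 0 < τ) {μ ν : Measure (Euc d)} (h : slopeW μ₀ F μ = ⊤ ∨ slopeW μ₀ F ν = ⊤) :
    LamE μ₀ F τ μ ν = ⊤ := by
  have hpos : (0 : ℝ) < τ ^ 2 / 2 := by positivity
  have hne : ∀ x : ℝ≥0∞, ((τ ^ 2 / 2 : ℝ) : EReal) * (x : EReal) ^ 2 ≠ ⊥ := fun x =>
    ne_of_gt (EReal.bot_lt_zero.trans_le
      (mul_nonneg (EReal.coe_nonneg.2 hpos.le) (pow_nonneg (EReal.coe_ennreal_nonneg x) 2)))
  have htop : ((τ ^ 2 / 2 : ℝ) : EReal) * ((⊤ : ℝ≥0∞) : EReal) ^ 2 = ⊤ := by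
    rw [EReal.coe_ennreal_top, pow_two (⊤ : EReal), EReal.top_mul_top, EReal.coe_mul_top_of_pos hpos]
  rcases h with h | h
  · rw [LamE, h, htop, EReal.coe_add_top, EReal.top_add_of_ne_bot (hne _)]
  · rw [LamE, h, htop, EReal.add_top_of_ne_bot]
    rw [Ne, EReal.add_eq_bot_iff, not_or]
    exact ⟨EReal.coe_ne_bot _, hne _⟩

lemma LamE_coe {d : ℕ} {μ₀ : Measure (Euc d)} {F : Measure (Euc d) → EReal} {τ : ℝ}
    {μ ν : Measure (Euc d)} (hμ : slopeW μ₀ F μ ≠ ⊤) (hν : slopeW μ₀ F ν ≠ ⊤) :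
    LamE μ₀ F τ μ ν = ((W2 μ ν ^ 2 + τ ^ 2 / 2 * (slopeW μ₀ F μ).toReal ^ 2
      + τ ^ 2 / 2 * (slopeW μ₀ F ν).toReal ^ 2 : ℝ) : EReal) := by
  rw [LamE, ← EReal.coe_toReal (x := (slopeW μ₀ F μ : EReal)) (by simpa) (by simp),
    ← EReal.coe_toReal (x := (slopeW μ₀ F ν : EReal)) (by simpa) (by simp),
    EReal.toReal_coe_ennreal, EReal.toReal_coe_ennreal]
  norm_cast

/-- **Quantitative contraction of the proximal map** (Theorem 1.3, inequality (1.18)).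
For `E` proper, coercive, lower semicontinuous and `λ`-convex along generalized
geodesics (`λ ∈ ℝ`), and `τ > 0` with `λτ > -1`, for all `μ, ν` in the `W₂`-closure
of `D(E)` with proximal points `μ_τ, ν_τ`:
`Λ_τ(μ_τ,ν_τ) - Λ_τ(μ,ν) ≤ -(1/2)(τ|∇_W E|(ν) - W₂(ν,ν_τ))² - (1/2)(τ|∇_W E|(μ) - W₂(μ,μ_τ))²
  - (λτ/2)[2W₂²(μ_τ,ν_τ) + W₂²(μ,ν_τ) + W₂²(ν,μ_τ) + W₂²(ν,ν_τ) + W₂²(μ,μ_τ)]`. -/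
theorem proximal_contraction_quantitative
    {d : ℕ} (μ₀ : Measure (Euc d)) (hμ₀ : IsProbabilityMeasure μ₀)
    (F : Measure (Euc d) → EReal) (lam : ℝ)
    (hproper : ProperFn μ₀ F) (hcoer : CoerciveFn μ₀ F) (hlsc : W2LSC μ₀ F)
    (hconv : GenGeoConvex μ₀ lam F)
    (τ : ℝ) (hτ : 0 < τ) (hlamτ : lam * τ > -1)
    (μ ν : Measure (Euc d))
    (hμ : μ ∈ W2Closure μ₀ (Dom μ₀ F)) (hν : ν ∈ W2Closure μ₀ (Dom μ₀ F))
    (μτ ντ : Measure (Euc d))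
    (hμτ : IsProximal μ₀ F τ μ μτ) (hντ : IsProximal μ₀ F τ ν ντ) :
    LamE μ₀ F τ μτ ντ - LamE μ₀ F τ μ ν ≤
      -(((1/2 : ℝ) : EReal) *
          ((τ : EReal) * (slopeW μ₀ F ν : EReal) - ((W2 ν ντ : ℝ) : EReal)) ^ 2)
      - ((1/2 : ℝ) : EReal) *
          ((τ : EReal) * (slopeW μ₀ F μ : EReal) - ((W2 μ μτ : ℝ) : EReal)) ^ 2
      - ((lam * τ / 2 : ℝ) : EReal) *
          ((2 * (W2 μτ ντ) ^ 2 + (W2 μ ντ) ^ 2 + (W2 ν μτ) ^ 2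
            + (W2 ν ντ) ^ 2 + (W2 μ μτ) ^ 2 : ℝ) : EReal) := by
  by_cases hs : slopeW μ₀ F μ = ⊤ ∨ slopeW μ₀ F ν = ⊤
  · -- the left-hand side is `x - ⊤ = ⊥`, whatever `x` is
    rw [LamE_eq_top hτ hs, EReal.sub_top]
    exact bot_le
  rw [not_or] at hs
  obtain ⟨hsμ, hsν⟩ := hs
  have hbot := hproper.1
  have hμP := hμ.1
  have hνP := hν.1
  obtain ⟨a, ha⟩ : ∃ a : ℝ, F μ = a :=
    ⟨_, (EReal.coe_toReal (ne_top_of_slope hbot hμ hsμ) (hbot μ)).symm⟩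
  obtain ⟨b, hb⟩ : ∃ b : ℝ, F ν = b :=
    ⟨_, (EReal.coe_toReal (ne_top_of_slope hbot hν hsν) (hbot ν)).symm⟩
  obtain ⟨aτ, haτ⟩ : ∃ a : ℝ, F μτ = a :=
    ⟨_, (EReal.coe_toReal (hμτ.ne_top hproper) (hbot μτ)).symm⟩
  obtain ⟨bτ, hbτ⟩ : ∃ b : ℝ, F ντ = b :=
    ⟨_, (EReal.coe_toReal (hντ.ne_top hproper) (hbot ντ)).symm⟩
  have hsμτ := hμτ.slope_le hbot hconv hμ₀ hτ hμP haτ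
  have hsντ := hντ.slope_le hbot hconv hμ₀ hτ hνP hbτ
  rw [LamE_coe hsμ hsν, LamE_coe (ne_top_of_le_ne_top ENNReal.ofReal_ne_top hsμτ)
    (ne_top_of_le_ne_top ENNReal.ofReal_ne_top hsντ),
    ← EReal.coe_toReal (x := (slopeW μ₀ F μ : EReal)) (by simpa) (by simp),
    ← EReal.coe_toReal (x := (slopeW μ₀ F ν : EReal)) (by simpa) (by simp),
    EReal.toReal_coe_ennreal, EReal.toReal_coe_ennreal]
  have hdiv : ∀ x : ℝ≥0∞, ∀ w : ℝ, 0 ≤ w → x ≤ ENNReal.ofReal (w / τ) →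
      τ ^ 2 * x.toReal ^ 2 ≤ w ^ 2 := by
    intro x w hw hx
    have h := ENNReal.toReal_le_of_le_ofReal (by positivity) hx
    rw [le_div_iff₀ hτ] at h
    have h0 : 0 ≤ x.toReal * τ := by positivity
    nlinarith
  have hsμτ := hdiv _ _ (W2_nonneg _ _) hsμτ
  have hsντ := hdiv _ _ (W2_nonneg _ _) hsντ
  have e1 := hμτ.evi hconv hμ₀ hτ hlamτ hμP hντ.1 haτ hbτ
  have e2 := hντ.evi hconv hμ₀ hτ hlamτ hνP hμP hbτ ha
  have e3 := hντ.evi hconv hμ₀ hτ hlamτ hνP hμτ.1 hbτ haτ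
  have e4 := hμτ.evi hconv hμ₀ hτ hlamτ hμP hνP haτ hb
  have g1 := mul_le_mul_of_nonneg_left
    (hconv.sub_le_slope hbot hμ₀ hμP hμτ.1 ha haτ hsμ) hτ.le
  have g2 := mul_le_mul_of_nonneg_left
    (hconv.sub_le_slope hbot hμ₀ hνP hντ.1 hb hbτ hsν) hτ.le
  rw [W2_comm ντ μτ] at e3
  rw [W2_comm ντ μ, W2_comm ν μ] at e2
  rw [W2_comm μτ ν] at e4
  norm_cast
  -- `e1 + e2 + g1` and `e3 + e4 + g2` have the same shape with `μ` and `ν` exchanged; their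
  -- average is the claim once `τ² s(μ_τ)² ≤ W₂²(μ,μ_τ)`, and likewise for `ν`, is added
  linarith
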